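/- Let z ∈ (1/2, 1) and let μ be the unique absolutely continuous f_z-invariant Borel probability measure on [0,1]. Then there exist Hölder continuous functions φ, ψ : [0,1] → ℝ such that ∑_{n=1}^∞ |∫ φ·(ψ ∘ f_z^n) dμ − (∫ φ dμ)(∫ ψ dμ)| = ∞; that is, correlations of Hölder observables are not summable. -/

import Mathlib

open MeasureTheory Set NNReal

/-- The Liverani–Saussol–Vaienti (Pomeau–Manneville type) map with parameter `z`. -/
noncomputable def lsv (z : ℝ) (y : ℝ) : ℝ :=
  if y < 1 / 2 then y * (1 + 2 ^ z * y ^ z) else 2 * y - 1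

/-!
Let `xₙ` be the preimages of `1` along the left branch; they decay no faster than `n ^ (-1 / z)`.
The orbit of a point of `[0, x₂ₙ]` stays in `[0, xₙ]` for `n` steps, so if `φ` is continuous at `0`
and `φ 0 ≠ ∫ φ dμ`, its `n`-th Birkhoff sum differs from its mean by at least `δ n` on `[0, x₂ₙ]`.
If the autocorrelations of `φ` were summable, that Birkhoff sum would have variance `O(n)`, and
Chebyshev's inequality would give `μ [0, x₂ₙ] = O(1 / n)`. But the density of `μ` is nonincreasing
and bounded below by some `c > 0` in the right half, which yields `μ [0, x₂ₙ] ≥ c n x₃ₙ`.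
So `n² x₃ₙ` would be bounded, although `1 / z < 2`.

Monotonicity of the density is expressed as concavity of `t ↦ μ [0, t)`. All inverse branches of
the `n`-th iterate are concave and have images of length at most `xₙ`, and on such short intervals
the absolutely continuous `μ` is nearly proportional to Lebesgue measure. Hence the distribution
function of `μ` is nearly concave along every inverse branch, and by invariance the sum of these
functions over the branches is the distribution function of `μ` itself.
-/

section Stationary

open ProbabilityTheory

lemma birkhoffSum_succ_eq_add_comp {α M : Type*} [AddCommMonoid M] (f : α → α) (g : α → M)
    (n : ℕ) : birkhoffSum f g (n + 1) = g + birkhoffSum f g n ∘ f :=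
  funext fun x => birkhoffSum_succ' f g n x

variable {Ω : Type*} [MeasurableSpace Ω] {μ : Measure Ω} {T : Ω → Ω}

section Normed

variable {E : Type*} [NormedAddCommGroup E] {φ : Ω → E}

lemma memLp_birkhoffSum {p : ENNReal} (hT : MeasurePreserving T μ μ) (hφ : MemLp φ p μ) (n : ℕ) :
    MemLp (birkhoffSum T φ n) p μ :=
  memLp_finsetSum _ fun k _ => hφ.comp_measurePreserving (hT.iterate k)

variable [NormedSpace ℝ E]

lemma integral_comp_of_measurePreserving (hT : MeasurePreserving T μ μ)
    (hφ : AEStronglyMeasurable φ μ) : ∫ x, φ (T x) ∂μ = ∫ x, φ x ∂μ := by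
  rw [← integral_map hT.aemeasurable (hT.map_eq.symm ▸ hφ), hT.map_eq]

lemma integral_birkhoffSum (hT : MeasurePreserving T μ μ) (hφ : Integrable φ μ) (n : ℕ) :
    ∫ x, birkhoffSum T φ n x ∂μ = n • ∫ x, φ x ∂μ := by
  have hint (k : ℕ) : Integrable (fun x => φ (T^[k] x)) μ :=
    (hT.iterate k).integrable_comp_of_integrable hφ
  simp [birkhoffSum, integral_finsetSum _ fun k _ => hint k,
    integral_comp_of_measurePreserving (hT.iterate _) hφ.aestronglyMeasurable]

end Normed

variable {φ ψ : Ω → ℝ}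

lemma covariance_comp_of_measurePreserving [IsProbabilityMeasure μ] (hT : MeasurePreserving T μ μ)
    (hφ : MemLp φ 2 μ) (hψ : MemLp ψ 2 μ) :
    cov[φ, ψ ∘ T; μ] = ∫ x, φ x * ψ (T x) ∂μ - (∫ x, φ x ∂μ) * ∫ x, ψ x ∂μ := by
  rw [covariance_eq_sub hφ (hψ.comp_measurePreserving hT)]
  simp only [Pi.mul_apply, Function.comp_apply,
    integral_comp_of_measurePreserving hT hψ.aestronglyMeasurable]

lemma variance_birkhoffSum_succ [IsFiniteMeasure μ] (hT : MeasurePreserving T μ μ)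
    (hφ : MemLp φ 2 μ) (n : ℕ) :
    Var[birkhoffSum T φ (n + 1); μ] =
      Var[φ; μ] + 2 * ∑ k ∈ Finset.range n, cov[φ, φ ∘ T^[k + 1]; μ]
        + Var[birkhoffSum T φ n; μ] := by
  have hS := memLp_birkhoffSum hT hφ n
  have hvar : Var[birkhoffSum T φ n ∘ T; μ] = Var[birkhoffSum T φ n; μ] :=
    hT.variance_fun_comp hS.aemeasurable
  have hcov : cov[φ, birkhoffSum T φ n ∘ T; μ] =
      ∑ k ∈ Finset.range n, cov[φ, φ ∘ T^[k + 1]; μ] :=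
    covariance_fun_sum_right' (X := fun k => φ ∘ T^[k + 1]) (s := Finset.range n)
      (fun k _ => hφ.comp_measurePreserving (hT.iterate (k + 1))) hφ
  rw [birkhoffSum_succ_eq_add_comp, variance_add hφ (hS.comp_measurePreserving hT), hvar, hcov]

lemma variance_birkhoffSum_le [IsFiniteMeasure μ] (hT : MeasurePreserving T μ μ)
    (hφ : MemLp φ 2 μ) (hsum : Summable fun k : ℕ => |cov[φ, φ ∘ T^[k + 1]; μ]|) (n : ℕ) :
    Var[birkhoffSum T φ n; μ] ≤
      n * (Var[φ; μ] + 2 * ∑' k : ℕ, |cov[φ, φ ∘ T^[k + 1]; μ]|) := by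
  induction n with
  | zero => simp
  | succ n ih =>
    have hcov : ∑ k ∈ Finset.range n, cov[φ, φ ∘ T^[k + 1]; μ] ≤
        ∑' k : ℕ, |cov[φ, φ ∘ T^[k + 1]; μ]| :=
      (Finset.sum_le_sum fun k _ => le_abs_self _).trans
        (hsum.sum_le_tsum _ fun k _ => abs_nonneg _)
    rw [variance_birkhoffSum_succ hT hφ]
    push_cast
    linarith

lemma exists_measureReal_birkhoffSum_deviation_le [IsFiniteMeasure μ]
    (hT : MeasurePreserving T μ μ) (hφ : MemLp φ 2 μ)
    (hsum : Summable fun k : ℕ => |cov[φ, φ ∘ T^[k + 1]; μ]|) {δ : ℝ} (hδ : 0 < δ) :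
    ∃ C, ∀ n : ℕ, n * μ.real {x | n * δ ≤ |birkhoffSum T φ n x - n * ∫ y, φ y ∂μ|} ≤ C := by
  set V := Var[φ; μ] + 2 * ∑' k : ℕ, |cov[φ, φ ∘ T^[k + 1]; μ]|
  have hV : 0 ≤ V :=
    add_nonneg (variance_nonneg _ _) (mul_nonneg zero_le_two (tsum_nonneg fun _ => abs_nonneg _))
  refine ⟨V / δ ^ 2, fun n => ?_⟩
  rcases n.eq_zero_or_pos with rfl | hn
  · simpa using div_nonneg hV (sq_nonneg δ)
  have hn' : (0 : ℝ) < n := Nat.cast_pos.2 hn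
  have hvar : Var[birkhoffSum T φ n; μ] / (n * δ) ^ 2 ≤ n * V / (n * δ) ^ 2 := by
    gcongr
    exact variance_birkhoffSum_le hT hφ hsum n
  have hcheb := meas_ge_le_variance_div_sq (memLp_birkhoffSum hT hφ n) (mul_pos hn' hδ)
  rw [integral_birkhoffSum hT (hφ.integrable one_le_two), nsmul_eq_mul] at hcheb
  calc n * μ.real {x | n * δ ≤ |birkhoffSum T φ n x - n * ∫ y, φ y ∂μ|}
      ≤ n * (n * V / (n * δ) ^ 2) := by
        gcongr
        exact (ENNReal.toReal_le_of_le_ofReal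
          (div_nonneg (variance_nonneg _ _) (sq_nonneg _)) hcheb).trans hvar
    _ = V / δ ^ 2 := by field_simp

end Stationary

section Concavity

variable {E : Type*} [AddCommMonoid E] [SMul ℝ E] {s : Set E}

lemma concaveOn_comp_of_mapsTo {t : Set ℝ} {g : ℝ → ℝ} {f : E → ℝ} (hg : ConcaveOn ℝ t g)
    (hg_mono : MonotoneOn g t) (hf : ConcaveOn ℝ s f) (hmaps : MapsTo f s t) :
    ConcaveOn ℝ s (g ∘ f) :=
  ⟨hf.1, fun _ hx _ hy _ _ ha hb hab =>
    (hg.2 (hmaps hx) (hmaps hy) ha hb hab).trans <|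
      hg_mono (hg.1 (hmaps hx) (hmaps hy) ha hb hab) (hmaps (hf.1 hx hy ha hb hab))
        (hf.2 hx hy ha hb hab)⟩

lemma concaveOn_of_forall_exists_abs_sub_le {H : E → ℝ}
    (h : ∀ ε > 0, ∃ W, ConcaveOn ℝ s W ∧ ∀ x ∈ s, |H x - W x| ≤ ε) : ConcaveOn ℝ s H := by
  have hs : Convex ℝ s := let ⟨_, hW, _⟩ := h 1 one_pos; hW.1
  refine ⟨hs, fun x hx y hy a b ha hb hab => le_of_forall_pos_le_add fun ε hε => ?_⟩
  obtain ⟨W, hW, hHW⟩ := h (ε / 2) (half_pos hε)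
  have hlower (u : E) (hu : u ∈ s) : H u ≤ W u + ε / 2 := by
    linarith [(abs_le.1 (hHW u hu)).2]
  calc a • H x + b • H y ≤ a • (W x + ε / 2) + b • (W y + ε / 2) := by
        gcongr
        exacts [hlower x hx, hlower y hy]
    _ = (a • W x + b • W y) + ε / 2 := by
        simp only [smul_eq_mul]
        linear_combination ε / 2 * hab
    _ ≤ W (a • x + b • y) + ε / 2 := by
        gcongr
        exact hW.2 hx hy ha hb hab
    _ ≤ H (a • x + b • y) + ε := by
        linarith [(abs_le.1 (hHW _ (hs hx hy ha hb hab))).1]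

end Concavity

section LocallyProportional

variable {X : Type*} [PseudoMetricSpace X] [WeaklyLocallyCompactSpace X] [MeasurableSpace X]
  [BorelSpace X] {l : Measure X} [IsFiniteMeasure l] [l.Regular]

lemma exists_integrable_locally_near_const {h : X → ℝ} (hh : Integrable h l) (hh_nonneg : 0 ≤ h)
    {ε : ℝ} (hε : 0 < ε) :
    ∃ e : X → ℝ, Integrable e l ∧ 0 ≤ e ∧ ∫ x, e x ∂l ≤ ε ∧
      ∃ δ > 0, ∀ U : Set X, (∀ x ∈ U, ∀ y ∈ U, dist x y < δ) →
        ∃ c ≥ 0, ∀ x ∈ U, |h x - c| ≤ e x := by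
  obtain ⟨g, hg_supp, hg_close, hg_cont, hg⟩ :=
    hh.exists_hasCompactSupport_integral_sub_le (half_pos hε)
  set η := ε / (2 * (l.real univ + 1))
  have hη : 0 < η := by positivity
  obtain ⟨δ, hδ, hg_unif⟩ := Metric.uniformContinuous_iff.1
    (hg_supp.uniformContinuous_of_continuous hg_cont) η hη
  refine ⟨fun x => ‖h x - g x‖ + η, (hh.sub hg).norm.add (integrable_const η),
    fun _ => add_nonneg (norm_nonneg _) hη.le, ?_, δ, hδ, fun U hU => ?_⟩
  · have hle : l.real univ * η ≤ ε / 2 := by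
      rw [mul_div_assoc', div_le_div_iff₀ (by positivity) two_pos]
      linarith
    rw [integral_add (f := fun x => ‖h x - g x‖) (hh.sub hg).norm (integrable_const η),
      integral_const, smul_eq_mul]
    linarith
  · rcases U.eq_empty_or_nonempty with rfl | ⟨x₀, hx₀⟩
    · exact ⟨0, le_rfl, fun _ => False.elim⟩
    refine ⟨max (g x₀) 0, le_max_right _ _, fun x hx => ?_⟩
    have hgx : |g x - g x₀| < η := hg_unif (hU x hx x₀ hx₀)
    have hhx : 0 ≤ h x := hh_nonneg x
    have hclip : |h x - max (g x₀) 0| ≤ |h x - g x₀| := by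
      simpa only [max_eq_left hhx] using abs_max_sub_max_le_abs (h x) (g x₀) 0
    have htri := abs_sub_le (h x) (g x) (g x₀)
    simp only [Real.norm_eq_abs]
    linarith

lemma exists_measure_locally_proportional {μ : Measure X} [IsFiniteMeasure μ] (hμ : μ ≪ l)
    {ε : ℝ} (hε : 0 < ε) :
    ∃ ρ : Measure X, IsFiniteMeasure ρ ∧ ρ ≪ l ∧ ρ.real univ ≤ ε ∧
      ∃ δ > 0, ∀ U : Set X, (∀ x ∈ U, ∀ y ∈ U, dist x y < δ) → ∃ c ≥ 0,
        ∀ s ⊆ U, MeasurableSet s → |μ.real s - c * l.real s| ≤ ρ.real s := by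
  have hh : Integrable (fun x => (μ.rnDeriv l x).toReal) l := Measure.integrable_toReal_rnDeriv
  obtain ⟨e, he, he_nonneg, heε, δ, hδ, hloc⟩ :=
    exists_integrable_locally_near_const hh (fun _ => ENNReal.toReal_nonneg) hε
  have hρ {s : Set X} (hs : MeasurableSet s) :
      (l.withDensity fun x => ENNReal.ofReal (e x)).real s = ∫ x in s, e x ∂l := by
    rw [measureReal_def, withDensity_apply _ hs, integral_eq_lintegral_of_nonneg_ae
      (ae_of_all _ he_nonneg) he.aestronglyMeasurable.restrict]
  refine ⟨l.withDensity fun x => ENNReal.ofReal (e x), isFiniteMeasure_withDensity_ofReal he.2,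
    withDensity_absolutelyContinuous _ _, ?_, δ, hδ, fun U hU => ?_⟩
  · rwa [hρ MeasurableSet.univ, setIntegral_univ]
  obtain ⟨c, hc, hce⟩ := hloc U hU
  refine ⟨c, hc, fun s hs hs_meas => ?_⟩
  rw [hρ hs_meas, ← Measure.setIntegral_toReal_rnDeriv hμ, mul_comm, ← smul_eq_mul,
    ← setIntegral_const, ← integral_sub hh.integrableOn (integrable_const _)]
  have hse : ∀ x ∈ s, ‖(μ.rnDeriv l x).toReal - c‖ ≤ e x := fun x hx => hce x (hs hx)
  exact norm_integral_le_of_norm_le he.integrableOn (ae_restrict_of_forall_mem hs_meas hse)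

end LocallyProportional

section Branches

variable {z : ℝ}

/-- The formula of the left branch of `lsv z`, used on all of `[0, ∞)`. -/
noncomputable def lsvLeft (z y : ℝ) : ℝ :=
  y * (1 + 2 ^ z * y ^ z)

@[simp] lemma lsvLeft_zero : lsvLeft z 0 = 0 := zero_mul _

@[simp] lemma lsvLeft_half : lsvLeft z (1 / 2) = 1 := by
  rw [lsvLeft, ← Real.mul_rpow zero_le_two (by norm_num)]
  norm_num

lemma continuous_lsvLeft (hz : 0 < z) : Continuous (lsvLeft z) := by
  unfold lsvLeft
  have := Real.continuous_rpow_const hz.le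
  fun_prop

lemma le_lsvLeft {y : ℝ} (hy : 0 ≤ y) : y ≤ lsvLeft z y :=
  le_mul_of_one_le_right hy (le_add_of_nonneg_right (by positivity))

lemma lsvLeft_strictMonoOn (hz : 0 < z) : StrictMonoOn (lsvLeft z) (Ici 0) := by
  intro a (ha : 0 ≤ a) b _ hab
  unfold lsvLeft
  gcongr

lemma convexOn_lsvLeft (hz : 0 < z) : ConvexOn ℝ (Ici 0) (lsvLeft z) := by
  have hpow : ConvexOn ℝ (Ici 0) fun y : ℝ => y ^ (1 + z) := convexOn_rpow (by linarith)
  refine ((convexOn_id (convex_Ici 0)).add (hpow.smul (c := (2 : ℝ) ^ z) (by positivity))).congr ?_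
  intro y (hy : 0 ≤ y)
  simp only [lsvLeft, Pi.add_apply, smul_eq_mul, id,
    Real.rpow_add_of_nonneg hy zero_le_one hz.le, Real.rpow_one]
  ring

lemma lsvLeft_add_le (hz : 0 < z) {u v : ℝ} (hu : 0 ≤ u) (hv : 0 ≤ v) :
    lsvLeft z u + lsvLeft z v ≤ lsvLeft z (u + v) := by
  calc lsvLeft z u + lsvLeft z v
      ≤ u * (1 + 2 ^ z * (u + v) ^ z) + v * (1 + 2 ^ z * (u + v) ^ z) := by
        unfold lsvLeft
        gcongr <;> linarith
    _ = lsvLeft z (u + v) := by rw [← add_mul, lsvLeft]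

/-- The inverse of the left branch of `lsv z`; its values outside `[0, 1]` are irrelevant. -/
noncomputable def lsvLeftInv (z : ℝ) : ℝ → ℝ :=
  Function.invFunOn (lsvLeft z) (Icc 0 (1 / 2))

/-- The inverse of the right branch `y ↦ 2 * y - 1` of the map `lsv z`. -/
noncomputable def lsvRightInv (t : ℝ) : ℝ :=
  (1 + t) / 2

lemma mem_image_lsvLeft (hz : 0 < z) {t : ℝ} (ht : t ∈ Icc (0 : ℝ) 1) :
    t ∈ lsvLeft z '' Icc 0 (1 / 2) := by
  apply intermediate_value_Icc (by norm_num) (continuous_lsvLeft hz).continuousOn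
  rwa [lsvLeft_zero, lsvLeft_half]

lemma lsvLeftInv_mem_Icc_half (hz : 0 < z) {t : ℝ} (ht : t ∈ Icc (0 : ℝ) 1) :
    lsvLeftInv z t ∈ Icc (0 : ℝ) (1 / 2) :=
  Function.invFunOn_mem (mem_image_lsvLeft hz ht)

lemma lsvLeft_lsvLeftInv (hz : 0 < z) {t : ℝ} (ht : t ∈ Icc (0 : ℝ) 1) :
    lsvLeft z (lsvLeftInv z t) = t :=
  Function.invFunOn_eq (mem_image_lsvLeft hz ht)

lemma lsvLeft_le_iff (hz : 0 < z) {t y : ℝ} (ht : t ∈ Icc (0 : ℝ) 1) (hy : 0 ≤ y) :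
    lsvLeft z y ≤ t ↔ y ≤ lsvLeftInv z t := by
  rw [← (lsvLeft_strictMonoOn hz).le_iff_le hy (lsvLeftInv_mem_Icc_half hz ht).1,
    lsvLeft_lsvLeftInv hz ht]

lemma le_lsvLeft_iff (hz : 0 < z) {t y : ℝ} (ht : t ∈ Icc (0 : ℝ) 1) (hy : 0 ≤ y) :
    t ≤ lsvLeft z y ↔ lsvLeftInv z t ≤ y := by
  rw [← (lsvLeft_strictMonoOn hz).le_iff_le (lsvLeftInv_mem_Icc_half hz ht).1 hy,
    lsvLeft_lsvLeftInv hz ht]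

lemma lsvLeftInv_lsvLeft (hz : 0 < z) {y : ℝ} (hy : y ∈ Icc (0 : ℝ) (1 / 2)) :
    lsvLeftInv z (lsvLeft z y) = y :=
  ((lsvLeft_strictMonoOn hz).injOn.mono Icc_subset_Ici_self).leftInvOn_invFunOn hy

lemma lsvLeftInv_zero (hz : 0 < z) : lsvLeftInv z 0 = 0 := by
  simpa only [lsvLeft_zero] using lsvLeftInv_lsvLeft hz (left_mem_Icc.2 one_half_pos.le)

lemma lsvLeftInv_one (hz : 0 < z) : lsvLeftInv z 1 = 1 / 2 := by
  simpa only [lsvLeft_half] using lsvLeftInv_lsvLeft hz (right_mem_Icc.2 one_half_pos.le)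

lemma lsvLeftInv_monotoneOn (hz : 0 < z) : MonotoneOn (lsvLeftInv z) (Icc 0 1) := by
  intro a ha b hb hab
  rwa [← lsvLeft_le_iff hz hb (lsvLeftInv_mem_Icc_half hz ha).1, lsvLeft_lsvLeftInv hz ha]

lemma mapsTo_lsvLeftInv (hz : 0 < z) : MapsTo (lsvLeftInv z) (Icc 0 1) (Icc 0 1) :=
  fun _ ht => Icc_subset_Icc_right (by norm_num) (lsvLeftInv_mem_Icc_half hz ht)

lemma concaveOn_lsvLeftInv (hz : 0 < z) : ConcaveOn ℝ (Icc 0 1) (lsvLeftInv z) := by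
  refine ⟨convex_Icc 0 1, fun a ha b hb p q hp hq hpq => ?_⟩
  have ha' := (mapsTo_lsvLeftInv hz ha).1
  have hb' := (mapsTo_lsvLeftInv hz hb).1
  have hconv := (convexOn_lsvLeft hz).2 ha' hb' hp hq hpq
  rw [lsvLeft_lsvLeftInv hz ha, lsvLeft_lsvLeftInv hz hb] at hconv
  exact (lsvLeft_le_iff hz (convex_Icc (0 : ℝ) 1 ha hb hp hq hpq)
    (convex_Ici (0 : ℝ) ha' hb' hp hq hpq)).1 hconv

lemma lsvLeftInv_le_self (hz : 0 < z) {t : ℝ} (ht : t ∈ Icc (0 : ℝ) 1) : lsvLeftInv z t ≤ t := by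
  simpa only [lsvLeft_lsvLeftInv hz ht] using
    le_lsvLeft (z := z) (lsvLeftInv_mem_Icc_half hz ht).1

lemma half_le_lsvLeftInv (hz : 0 < z) {t : ℝ} (ht : t ∈ Icc (0 : ℝ) 1) :
    t / 2 ≤ lsvLeftInv z t := by
  have hconc := (concaveOn_lsvLeftInv hz).2 (right_mem_Icc.2 zero_le_one)
    (left_mem_Icc.2 zero_le_one) ht.1 (sub_nonneg.2 ht.2) (add_sub_cancel t 1)
  simp only [lsvLeftInv_zero hz, lsvLeftInv_one hz, smul_eq_mul, mul_one, mul_zero, add_zero]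
    at hconc
  linarith

lemma lsvLeftInv_sub_le (hz : 0 < z) {a b : ℝ} (ha : 0 ≤ a) (hab : a ≤ b) (hb : b ≤ 1) :
    lsvLeftInv z b - lsvLeftInv z a ≤ lsvLeftInv z (b - a) := by
  have ha' : a ∈ Icc (0 : ℝ) 1 := ⟨ha, hab.trans hb⟩
  have hb' : b ∈ Icc (0 : ℝ) 1 := ⟨ha.trans hab, hb⟩
  have hmono : 0 ≤ lsvLeftInv z b - lsvLeftInv z a :=
    sub_nonneg.2 (lsvLeftInv_monotoneOn hz ha' hb' hab)
  rw [← lsvLeft_le_iff hz ⟨by linarith, by linarith⟩ hmono]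
  have hsuper := lsvLeft_add_le hz hmono (mapsTo_lsvLeftInv hz ha').1
  rw [sub_add_cancel, lsvLeft_lsvLeftInv hz ha', lsvLeft_lsvLeftInv hz hb'] at hsuper
  linarith

lemma lsvRightInv_monotone : Monotone lsvRightInv := fun a b hab => by
  unfold lsvRightInv
  gcongr

lemma mapsTo_lsvRightInv : MapsTo lsvRightInv (Icc 0 1) (Icc 0 1) := fun t ht => by
  unfold lsvRightInv
  constructor <;> linarith [ht.1, ht.2]

lemma concaveOn_lsvRightInv : ConcaveOn ℝ (Icc 0 1) lsvRightInv := by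
  refine ⟨convex_Icc 0 1, fun a _ b _ p q _ _ hpq => le_of_eq ?_⟩
  simp only [lsvRightInv, smul_eq_mul]
  linear_combination hpq / 2

end Branches

section EscapePoints

open Filter Topology

variable {z : ℝ}

/-- The preimages `x₀ = 1 > x₁ = 1 / 2 > x₂ > ⋯` of `1` along the left branch of `lsv z`: a point
of `(0, xₙ]` needs at least `n` iterations to leave `(0, 1 / 2]`. -/
noncomputable def escapePoint (z : ℝ) (n : ℕ) : ℝ :=
  (lsvLeftInv z)^[n] 1

lemma escapePoint_zero : escapePoint z 0 = 1 := rfl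

lemma escapePoint_succ (n : ℕ) : escapePoint z (n + 1) = lsvLeftInv z (escapePoint z n) :=
  Function.iterate_succ_apply' _ _ _

lemma escapePoint_mem_Icc (hz : 0 < z) (n : ℕ) : escapePoint z n ∈ Icc (0 : ℝ) 1 :=
  (mapsTo_lsvLeftInv hz).iterate n (right_mem_Icc.2 zero_le_one)

lemma escapePoint_succ_le_half (hz : 0 < z) (n : ℕ) : escapePoint z (n + 1) ≤ 1 / 2 := by
  rw [escapePoint_succ]
  exact (lsvLeftInv_mem_Icc_half hz (escapePoint_mem_Icc hz n)).2

lemma lsvLeft_escapePoint_succ (hz : 0 < z) (n : ℕ) :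
    lsvLeft z (escapePoint z (n + 1)) = escapePoint z n := by
  rw [escapePoint_succ, lsvLeft_lsvLeftInv hz (escapePoint_mem_Icc hz n)]

lemma escapePoint_pos (hz : 0 < z) (n : ℕ) : 0 < escapePoint z n := by
  induction n with
  | zero => exact one_pos
  | succ n ih =>
    rw [escapePoint_succ]
    exact (half_pos ih).trans_le (half_le_lsvLeftInv hz (escapePoint_mem_Icc hz n))

lemma escapePoint_antitone (hz : 0 < z) : Antitone (escapePoint z) :=
  antitone_nat_of_succ_le fun n => by
    rw [escapePoint_succ]
    exact lsvLeftInv_le_self hz (escapePoint_mem_Icc hz n)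

lemma tendsto_escapePoint (hz : 0 < z) : Tendsto (escapePoint z) atTop (𝓝 0) := by
  have hbdd : BddBelow (range (escapePoint z)) :=
    ⟨0, forall_mem_range.2 fun n => (escapePoint_mem_Icc hz n).1⟩
  have hlim := tendsto_atTop_ciInf (escapePoint_antitone hz) hbdd
  set x := ⨅ n, escapePoint z n
  have hfixed : lsvLeft z x = x := by
    refine tendsto_nhds_unique
      (((continuous_lsvLeft hz).tendsto x).comp ((tendsto_add_atTop_iff_nat 1).2 hlim)) ?_
    simpa only [Function.comp_def, lsvLeft_escapePoint_succ hz] using hlim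
  have hx : x = 0 := by
    by_contra hne
    have hpos : 0 < x := (le_ciInf fun n => (escapePoint_mem_Icc hz n).1).lt_of_ne' hne
    have : x < lsvLeft z x := lt_mul_of_one_lt_right hpos (lt_add_of_pos_right _ (by positivity))
    exact this.ne' hfixed
  rwa [hx] at hlim

lemma lsvLeft_rpow_le (hz1 : z ≤ 1) {y : ℝ} (hy : 0 ≤ y) :
    lsvLeft z y ^ z ≤ y ^ z * (1 + 2 * y ^ z) := by
  have htwo : (2 : ℝ) ^ z ≤ 2 := Real.rpow_le_self_of_one_le one_le_two hz1
  rw [lsvLeft, Real.mul_rpow hy (by positivity)]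
  gcongr
  calc (1 + 2 ^ z * y ^ z) ^ z ≤ 1 + 2 ^ z * y ^ z :=
        Real.rpow_le_self_of_one_le (le_add_of_nonneg_right (by positivity)) hz1
    _ ≤ 1 + 2 * y ^ z := by gcongr

lemma one_le_escapePoint_rpow_mul (hz : 0 < z) (hz1 : z ≤ 1) (n : ℕ) :
    1 ≤ escapePoint z n ^ z * (1 + 2 * n) := by
  induction n with
  | zero => simp [escapePoint_zero]
  | succ n ih =>
    have hpos : 0 < escapePoint z (n + 1) ^ z := Real.rpow_pos_of_pos (escapePoint_pos hz _) z
    have hstep := lsvLeft_rpow_le hz1 (escapePoint_mem_Icc hz (n + 1)).1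
    rw [lsvLeft_escapePoint_succ hz] at hstep
    set Y := escapePoint z (n + 1) ^ z
    have hmul : 1 ≤ Y * (1 + 2 * Y) * (1 + 2 * n) := ih.trans (by gcongr)
    push_cast
    by_contra! hlt
    have : Y * (1 + 2 * n) * (1 + 2 * Y) ≤ (1 - 2 * Y) * (1 + 2 * Y) := by
      gcongr
      linarith
    nlinarith

lemma rpow_neg_inv_le_escapePoint (hz : 0 < z) (hz1 : z ≤ 1) (n : ℕ) :
    (1 + 2 * n : ℝ) ^ (-z⁻¹) ≤ escapePoint z n := by
  have hn : (0 : ℝ) < 1 + 2 * n := by positivity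
  rw [← Real.rpow_le_rpow_iff (by positivity) (escapePoint_mem_Icc hz n).1 hz,
    ← Real.rpow_mul hn.le, neg_mul, inv_mul_cancel₀ hz.ne', Real.rpow_neg_one,
    inv_le_iff_one_le_mul₀ hn]
  exact one_le_escapePoint_rpow_mul hz hz1 n

lemma tendsto_rpow_mul_escapePoint_atTop (hz : 0 < z) (hz1 : z ≤ 1) {a : ℝ} (ha : z⁻¹ < a) :
    Tendsto (fun n : ℕ => (n : ℝ) ^ a * escapePoint z n) atTop atTop := by
  have hlim : Tendsto (fun n : ℕ => 3 ^ (-z⁻¹) * (n : ℝ) ^ (a - z⁻¹)) atTop atTop :=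
    ((_root_.tendsto_rpow_atTop (sub_pos.2 ha)).comp tendsto_natCast_atTop_atTop).const_mul_atTop
      (by positivity)
  refine tendsto_atTop_mono' _ ((eventually_ge_atTop 1).mono fun n hn => ?_) hlim
  have hn' : (1 : ℝ) ≤ n := mod_cast hn
  calc 3 ^ (-z⁻¹) * (n : ℝ) ^ (a - z⁻¹) = (n : ℝ) ^ a * (3 * n : ℝ) ^ (-z⁻¹) := by
        rw [Real.mul_rpow (by norm_num) (by positivity), sub_eq_add_neg,
          Real.rpow_add (by positivity)]
        ring
    _ ≤ (n : ℝ) ^ a * (1 + 2 * n : ℝ) ^ (-z⁻¹) := by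
        gcongr ?_ * ?_
        exact Real.rpow_le_rpow_of_nonpos (by positivity) (by linarith) (by simpa using hz.le)
    _ ≤ (n : ℝ) ^ a * escapePoint z n := by
        gcongr
        exact rpow_neg_inv_le_escapePoint hz hz1 n

lemma mapsTo_lsv_Icc_escapePoint (hz : 0 < z) (n : ℕ) :
    MapsTo (lsv z) (Icc 0 (escapePoint z (n + 1))) (Icc 0 (escapePoint z n)) := by
  intro y hy
  rcases (hy.2.trans (escapePoint_succ_le_half hz n)).lt_or_eq with hlt | rfl
  · have hle := (lsvLeft_strictMonoOn hz).monotoneOn hy.1 (escapePoint_mem_Icc hz (n + 1)).1 hy.2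
    rw [lsvLeft_escapePoint_succ hz] at hle
    simp only [lsv, if_pos hlt]
    exact ⟨hy.1.trans (le_lsvLeft hy.1), hle⟩
  · simpa [lsv] using (escapePoint_mem_Icc hz n).1

lemma mapsTo_lsv_iterate_Icc_escapePoint (hz : 0 < z) (n k : ℕ) :
    MapsTo (lsv z)^[k] (Icc 0 (escapePoint z (n + k))) (Icc 0 (escapePoint z n)) := by
  induction k with
  | zero => exact mapsTo_id _
  | succ k ih => exact ih.comp (mapsTo_lsv_Icc_escapePoint hz (n + k))

end EscapePoints

section PushForward

variable {z : ℝ}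

lemma measurable_lsv : Measurable (lsv z) :=
  Measurable.ite measurableSet_Iio (by fun_prop) (by fun_prop)

lemma mapsTo_lsv_Ici : MapsTo (lsv z) (Ici 0) (Ici 0) := by
  intro y (hy : 0 ≤ y)
  rw [mem_Ici, lsv]
  split_ifs with h
  · exact hy.trans (le_lsvLeft hy)
  · linarith

lemma ae_nonneg_map_lsv {ν : Measure ℝ} (hν : ∀ᵐ x ∂ν, 0 ≤ x) :
    ∀ᵐ x ∂ν.map (lsv z), 0 ≤ x :=
  (ae_map_iff measurable_lsv.aemeasurable measurableSet_Ici).2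
    (hν.mono fun _ hx => mapsTo_lsv_Ici hx)

-- The intervals are half-open because `lsv z` takes the value `0`, and not `1`, at `1 / 2`.
lemma lsv_mem_Ico_iff (hz : 0 < z) {a b y : ℝ} (ha : a ∈ Icc (0 : ℝ) 1) (hb : b ∈ Icc (0 : ℝ) 1)
    (hy : 0 ≤ y) :
    lsv z y ∈ Ico a b ↔ y ∈ Ico (lsvLeftInv z a) (lsvLeftInv z b) ∪
      Ico (lsvRightInv a) (lsvRightInv b) := by
  rw [mem_union, mem_Ico, mem_Ico, mem_Ico]
  rcases lt_or_ge y (1 / 2) with hlt | hge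
  · have hright : ¬lsvRightInv a ≤ y := by
      unfold lsvRightInv
      linarith [ha.1]
    have hleft : lsv z y = lsvLeft z y := if_pos hlt
    rw [hleft, le_lsvLeft_iff hz ha hy, ← not_le, le_lsvLeft_iff hz hb hy, not_le]
    tauto
  · have hleft : ¬y < lsvLeftInv z b := by
      linarith [(lsvLeftInv_mem_Icc_half hz hb).2]
    have hright (t : ℝ) : t ≤ 2 * y - 1 ↔ lsvRightInv t ≤ y := by
      unfold lsvRightInv
      constructor <;> intro <;> linarith
    rw [lsv, if_neg hge.not_gt, hright, ← not_le, hright, not_le]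
    tauto

lemma map_lsv_real_Ico (hz : 0 < z) {ν : Measure ℝ} [IsFiniteMeasure ν] (hν : ∀ᵐ x ∂ν, 0 ≤ x)
    {a b : ℝ} (ha : a ∈ Icc (0 : ℝ) 1) (hb : b ∈ Icc (0 : ℝ) 1) :
    (ν.map (lsv z)).real (Ico a b) = ν.real (Ico (lsvLeftInv z a) (lsvLeftInv z b)) +
      ν.real (Ico (lsvRightInv a) (lsvRightInv b)) := by
  have hdisj : Disjoint (Ico (lsvLeftInv z a) (lsvLeftInv z b))
      (Ico (lsvRightInv a) (lsvRightInv b)) := by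
    refine disjoint_left.2 fun y hy hy' => ?_
    have := hy.2.trans_le (lsvLeftInv_mem_Icc_half hz hb).2
    have := hy'.1
    unfold lsvRightInv at this
    linarith [ha.1]
  rw [map_measureReal_apply measurable_lsv measurableSet_Ico,
    ← measureReal_union hdisj measurableSet_Ico]
  exact measureReal_congr (hν.mono fun y hy => propext (lsv_mem_Ico_iff hz ha hb hy))

end PushForward

section InverseBranches

variable {z : ℝ} {n : ℕ} {G : ℝ → ℝ}

/-- `IsInverseBranch z n G` says that `G` is one of the `2 ^ n` inverse branches of the iterate
`(lsv z)^[n]` on `[0, 1]`. -/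
inductive IsInverseBranch (z : ℝ) : ℕ → (ℝ → ℝ) → Prop
  | id : IsInverseBranch z 0 id
  | left {n : ℕ} {G : ℝ → ℝ} : IsInverseBranch z n G → IsInverseBranch z (n + 1) (lsvLeftInv z ∘ G)
  | right {n : ℕ} {G : ℝ → ℝ} : IsInverseBranch z n G → IsInverseBranch z (n + 1) (lsvRightInv ∘ G)

namespace IsInverseBranch

lemma mapsTo (hz : 0 < z) (hG : IsInverseBranch z n G) : MapsTo G (Icc 0 1) (Icc 0 1) := by
  induction hG with
  | id => exact mapsTo_id _
  | left _ ih => exact (mapsTo_lsvLeftInv hz).comp ih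
  | right _ ih => exact mapsTo_lsvRightInv.comp ih

lemma monotoneOn (hz : 0 < z) (hG : IsInverseBranch z n G) : MonotoneOn G (Icc 0 1) := by
  induction hG with
  | id => exact monotoneOn_id
  | left hG ih => exact (lsvLeftInv_monotoneOn hz).comp ih (hG.mapsTo hz)
  | right _ ih => exact lsvRightInv_monotone.comp_monotoneOn ih

lemma concaveOn (hz : 0 < z) (hG : IsInverseBranch z n G) : ConcaveOn ℝ (Icc 0 1) G := by
  induction hG with
  | id => exact concaveOn_id (convex_Icc 0 1)
  | left hG ih =>
    exact concaveOn_comp_of_mapsTo (concaveOn_lsvLeftInv hz) (lsvLeftInv_monotoneOn hz) ih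
      (hG.mapsTo hz)
  | right hG ih =>
    exact concaveOn_comp_of_mapsTo concaveOn_lsvRightInv (lsvRightInv_monotone.monotoneOn _) ih
      (hG.mapsTo hz)

lemma apply_one_sub_apply_zero_le (hz : 0 < z) (hG : IsInverseBranch z n G) :
    G 1 - G 0 ≤ escapePoint z n := by
  have hmem {n : ℕ} {G : ℝ → ℝ} (hG : IsInverseBranch z n G) :
      0 ≤ G 0 ∧ G 0 ≤ G 1 ∧ G 1 ≤ 1 :=
    ⟨(hG.mapsTo hz (left_mem_Icc.2 zero_le_one)).1,
      hG.monotoneOn hz (left_mem_Icc.2 zero_le_one) (right_mem_Icc.2 zero_le_one) zero_le_one,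
      (hG.mapsTo hz (right_mem_Icc.2 zero_le_one)).2⟩
  induction hG with
  | id => simp [escapePoint_zero]
  | @left n G hG ih =>
    obtain ⟨h0, h01, h1⟩ := hmem hG
    rw [escapePoint_succ]
    exact (lsvLeftInv_sub_le hz h0 h01 h1).trans
      (lsvLeftInv_monotoneOn hz ⟨by linarith, by linarith⟩ (escapePoint_mem_Icc hz n) ih)
  | @right n G _ ih =>
    calc lsvRightInv (G 1) - lsvRightInv (G 0) = (G 1 - G 0) / 2 := by
          unfold lsvRightInv
          ring
      _ ≤ escapePoint z n / 2 := by gcongr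
      _ ≤ escapePoint z (n + 1) := by
          rw [escapePoint_succ]
          exact half_le_lsvLeftInv hz (escapePoint_mem_Icc hz n)

end IsInverseBranch

/-- The distribution function `t ↦ ν [G 0, G t)` of `ν` along `G` differs from some concave function
on `[0, 1]` by at most `ρ [G 0, G t)`. Unlike a uniform error, these errors stay bounded by the
total mass of `ρ` when summed over the inverse branches. -/
def NearConcaveAlong (ν ρ : Measure ℝ) (G : ℝ → ℝ) : Prop :=
  ∃ W, ConcaveOn ℝ (Icc 0 1) W ∧
    ∀ t ∈ Icc (0 : ℝ) 1, |ν.real (Ico (G 0) (G t)) - W t| ≤ ρ.real (Ico (G 0) (G t))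

lemma NearConcaveAlong.map_lsv (hz : 0 < z) {ν ρ : Measure ℝ} [IsFiniteMeasure ν]
    [IsFiniteMeasure ρ] (hν : ∀ᵐ x ∂ν, 0 ≤ x) (hρ : ∀ᵐ x ∂ρ, 0 ≤ x)
    (hG : MapsTo G (Icc 0 1) (Icc 0 1)) (hleft : NearConcaveAlong ν ρ (lsvLeftInv z ∘ G))
    (hright : NearConcaveAlong ν ρ (lsvRightInv ∘ G)) :
    NearConcaveAlong (ν.map (lsv z)) (ρ.map (lsv z)) G := by
  obtain ⟨U, hU, hνU⟩ := hleft
  obtain ⟨V, hV, hνV⟩ := hright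
  refine ⟨U + V, hU.add hV, fun t ht => ?_⟩
  have hG0 := hG (left_mem_Icc.2 zero_le_one)
  rw [map_lsv_real_Ico hz hν hG0 (hG ht), map_lsv_real_Ico hz hρ hG0 (hG ht), Pi.add_apply,
    add_sub_add_comm]
  exact (abs_add_le _ _).trans (add_le_add (hνU t ht) (hνV t ht))

lemma nearConcaveAlong_id_map_lsv_iterate (hz : 0 < z) {ν ρ : Measure ℝ} [IsFiniteMeasure ν]
    [IsFiniteMeasure ρ] (hν : ∀ᵐ x ∂ν, 0 ≤ x) (hρ : ∀ᵐ x ∂ρ, 0 ≤ x)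
    (h : ∀ G, IsInverseBranch z n G → NearConcaveAlong ν ρ G) :
    NearConcaveAlong (ν.map (lsv z)^[n]) (ρ.map (lsv z)^[n]) id := by
  induction n generalizing ν ρ with
  | zero => simpa using h id .id
  | succ n ih =>
    rw [Function.iterate_succ, ← Measure.map_map (measurable_lsv.iterate n) measurable_lsv,
      ← Measure.map_map (measurable_lsv.iterate n) measurable_lsv]
    exact ih (ae_nonneg_map_lsv hν) (ae_nonneg_map_lsv hρ) fun G hG =>
      .map_lsv hz hν hρ (hG.mapsTo hz) (h _ hG.left) (h _ hG.right)

lemma exists_nearConcaveAlong (hz : 0 < z) {μ : Measure ℝ} [IsFiniteMeasure μ]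
    (hμ : μ ≪ volume.restrict (Icc 0 1)) {ε : ℝ} (hε : 0 < ε) :
    ∃ ρ : Measure ℝ, IsFiniteMeasure ρ ∧ (∀ᵐ x ∂ρ, 0 ≤ x) ∧ ρ.real univ ≤ ε ∧
      ∃ n, ∀ G, IsInverseBranch z n G → NearConcaveAlong μ ρ G := by
  obtain ⟨ρ, hρ_fin, hρ, hρε, δ, hδ, hloc⟩ := exists_measure_locally_proportional hμ hε
  have hρ_nonneg : ∀ᵐ x ∂ρ, 0 ≤ x :=
    hρ.ae_le ((ae_restrict_mem measurableSet_Icc).mono fun _ hx => hx.1)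
  obtain ⟨n, hn⟩ := ((tendsto_escapePoint hz).eventually_lt_const hδ).exists
  refine ⟨ρ, hρ_fin, hρ_nonneg, hρε, n, fun G hG => ?_⟩
  have h0 : (0 : ℝ) ∈ Icc (0 : ℝ) 1 := left_mem_Icc.2 zero_le_one
  have h1 : (1 : ℝ) ∈ Icc (0 : ℝ) 1 := right_mem_Icc.2 zero_le_one
  obtain ⟨c, hc, hμc⟩ := hloc (Icc (G 0) (G 1)) fun x hx y hy =>
    (Real.dist_le_of_mem_Icc hx hy).trans_lt ((hG.apply_one_sub_apply_zero_le hz).trans_lt hn)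
  refine ⟨fun t => c • (G t + -G 0), ((hG.concaveOn hz).add_const (-G 0)).smul hc, fun t ht => ?_⟩
  have hsub : Ico (G 0) (G t) ⊆ Icc 0 1 :=
    Ico_subset_Icc_self.trans (Icc_subset_Icc (hG.mapsTo hz h0).1 (hG.mapsTo hz ht).2)
  have hvol : (volume.restrict (Icc 0 1)).real (Ico (G 0) (G t)) = G t + -G 0 := by
    rw [measureReal_restrict_apply measurableSet_Ico, inter_eq_left.2 hsub,
      Real.volume_real_Ico_of_le (hG.monotoneOn hz h0 ht ht.1), sub_eq_add_neg]
  beta_reduce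
  rw [smul_eq_mul, ← hvol]
  exact hμc _ (Ico_subset_Icc_self.trans
    (Icc_subset_Icc_right (hG.monotoneOn hz ht h1 ht.2))) measurableSet_Ico

end InverseBranches

/-- `μ` is an absolutely continuous invariant measure of `lsv z` on `[0, 1]`. It is not required to
be a probability measure. -/
structure IsAcim (z : ℝ) (μ : Measure ℝ) : Prop where
  ae_mem_Icc : ∀ᵐ x ∂μ, x ∈ Icc (0 : ℝ) 1
  absolutelyContinuous : μ ≪ volume
  measurePreserving : MeasurePreserving (lsv z) μ μ

namespace IsAcim

open Filter Topology

variable {z : ℝ} {μ : Measure ℝ}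

lemma absolutelyContinuous_restrict (hμ : IsAcim z μ) : μ ≪ volume.restrict (Icc 0 1) := by
  rw [← Measure.restrict_eq_self_of_ae_mem hμ.ae_mem_Icc]
  exact hμ.absolutelyContinuous.restrict _

variable [IsFiniteMeasure μ]

lemma concaveOn_real_Ico_zero (hz : 0 < z) (hμ : IsAcim z μ) :
    ConcaveOn ℝ (Icc 0 1) fun t => μ.real (Ico 0 t) := by
  refine concaveOn_of_forall_exists_abs_sub_le fun ε hε => ?_
  obtain ⟨ρ, _, hρ_nonneg, hρε, n, hn⟩ :=
    exists_nearConcaveAlong hz hμ.absolutelyContinuous_restrict hε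
  obtain ⟨W, hW, hμW⟩ := nearConcaveAlong_id_map_lsv_iterate hz
    (hμ.ae_mem_Icc.mono fun _ hx => hx.1) hρ_nonneg hn
  rw [(hμ.measurePreserving.iterate n).map_eq] at hμW
  refine ⟨W, hW, fun t ht => (hμW t ht).trans (le_trans ?_ hρε)⟩
  rw [map_measureReal_apply (measurable_lsv.iterate n) measurableSet_Ico]
  exact measureReal_mono (subset_univ _)

lemma real_Ico_zero_eq (hz : 0 < z) (hμ : IsAcim z μ) {t : ℝ} (ht : t ∈ Icc (0 : ℝ) 1) :
    μ.real (Ico 0 t) = μ.real (Ico 0 (lsvLeftInv z t)) + μ.real (Ico (1 / 2) ((1 + t) / 2)) := by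
  have hmap := map_lsv_real_Ico hz (hμ.ae_mem_Icc.mono fun _ hx => hx.1)
    (left_mem_Icc.2 zero_le_one) ht
  rwa [hμ.measurePreserving.map_eq, lsvLeftInv_zero hz, lsvRightInv, lsvRightInv, add_zero] at hmap

lemma mul_le_real_Ico_half (hz : 0 < z) (hμ : IsAcim z μ) {t : ℝ} (ht : t ∈ Icc (0 : ℝ) 1) :
    t * μ.real (Ico (1 / 2) 1) ≤ μ.real (Ico (1 / 2) ((1 + t) / 2)) := by
  have hdiff {s : ℝ} (hs : 1 / 2 ≤ s) :
      μ.real (Ico (1 / 2) s) = μ.real (Ico 0 s) - μ.real (Ico 0 (1 / 2)) := by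
    rw [← Ico_union_Ico_eq_Ico one_half_pos.le hs,
      measureReal_union Ico_disjoint_Ico_same measurableSet_Ico, add_sub_cancel_left]
  have hconc := (hμ.concaveOn_real_Ico_zero hz).2 (x := 1 / 2) (y := 1) (by norm_num) (by norm_num)
    (sub_nonneg.2 ht.2) ht.1 (sub_add_cancel 1 t)
  have hpoint : (1 - t) • (1 / 2 : ℝ) + t • (1 : ℝ) = (1 + t) / 2 := by
    simp only [smul_eq_mul]
    ring
  rw [hpoint, smul_eq_mul, smul_eq_mul] at hconc
  rw [hdiff (by norm_num : (1 / 2 : ℝ) ≤ 1), hdiff (by linarith [ht.1])]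
  linarith

lemma real_Ico_half_pos (hz : 0 < z) (hμ : IsAcim z μ) [NeZero μ] :
    0 < μ.real (Ico (1 / 2) 1) := by
  refine measureReal_nonneg.lt_of_ne' fun hzero => NeZero.ne μ ?_
  have hconst (n : ℕ) : μ.real (Ico 0 (escapePoint z n)) = μ.real (Ico 0 1) := by
    induction n with
    | zero => rfl
    | succ n ih =>
      have ht := escapePoint_mem_Icc hz n
      have hright : μ.real (Ico (1 / 2) ((1 + escapePoint z n) / 2)) = 0 :=
        measureReal_mono_null (Ico_subset_Ico_right (by linarith [ht.2])) hzero
      rw [← ih, hμ.real_Ico_zero_eq hz ht, hright, add_zero, escapePoint_succ]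
  have hnull (n : ℕ) : μ (Ico (escapePoint z n) 1) = 0 := by
    have ht := escapePoint_mem_Icc hz n
    have hsplit := measureReal_union (μ := μ) (Ico_disjoint_Ico_same (a := 0)
      (b := escapePoint z n) (c := 1)) measurableSet_Ico
    rw [Ico_union_Ico_eq_Ico ht.1 ht.2, hconst n, left_eq_add] at hsplit
    exact (measureReal_eq_zero_iff).1 hsplit
  have hcover : Icc (0 : ℝ) 1 ⊆ {0, 1} ∪ ⋃ n, Ico (escapePoint z n) 1 := by
    intro x hx
    rcases hx.1.eq_or_lt with rfl | h0
    · simp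
    rcases hx.2.eq_or_lt with rfl | h1
    · simp
    obtain ⟨n, hn⟩ := ((tendsto_escapePoint hz).eventually_lt_const h0).exists
    exact .inr (mem_iUnion.2 ⟨n, hn.le, h1⟩)
  have hends : μ {0, 1} = 0 :=
    hμ.absolutelyContinuous ((Set.toFinite _).measure_zero _)
  have hIcc : μ (Icc 0 1) = 0 :=
    measure_mono_null hcover (measure_union_null hends (measure_iUnion_null hnull))
  rw [← Measure.measure_univ_eq_zero, ← measure_congr (eventuallyEq_univ.2 hμ.ae_mem_Icc)]
  exact hIcc

lemma mul_escapePoint_le_real_Ico (hz : 0 < z) (hμ : IsAcim z μ) (n k : ℕ) :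
    k * escapePoint z (n + k) * μ.real (Ico (1 / 2) 1) ≤ μ.real (Ico 0 (escapePoint z n)) := by
  induction k generalizing n with
  | zero => simp
  | succ k ih =>
    have hn := escapePoint_mem_Icc hz n
    have hanti : escapePoint z (n + 1 + k) ≤ escapePoint z n :=
      escapePoint_antitone hz (by lia)
    calc (k + 1 : ℕ) * escapePoint z (n + (k + 1)) * μ.real (Ico (1 / 2) 1)
        = k * escapePoint z (n + 1 + k) * μ.real (Ico (1 / 2) 1)
          + escapePoint z (n + 1 + k) * μ.real (Ico (1 / 2) 1) := by
          rw [add_assoc n 1 k, add_comm 1 k]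
          push_cast
          ring
      _ ≤ μ.real (Ico 0 (escapePoint z (n + 1)))
          + escapePoint z n * μ.real (Ico (1 / 2) 1) := by
          gcongr
          exact ih (n + 1)
      _ ≤ μ.real (Ico 0 (escapePoint z n)) := by
          rw [hμ.real_Ico_zero_eq hz hn, escapePoint_succ]
          gcongr
          exact hμ.mul_le_real_Ico_half hz hn

lemma memLp_id (hμ : IsAcim z μ) {p : ENNReal} : MemLp (id : ℝ → ℝ) p μ :=
  .of_bound aestronglyMeasurable_id 1 <| hμ.ae_mem_Icc.mono fun _ hx => by
    simpa [abs_of_nonneg hx.1] using hx.2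

lemma integral_id_pos [NeZero μ] (hμ : IsAcim z μ) : 0 < ∫ x, id x ∂μ := by
  have hnull : μ {0} = 0 := hμ.absolutelyContinuous (measure_singleton 0)
  have hsupp : Function.support (id : ℝ → ℝ) = {0}ᶜ := rfl
  have hnonneg : 0 ≤ᵐ[μ] (id : ℝ → ℝ) := hμ.ae_mem_Icc.mono fun _ hx => hx.1
  rw [integral_pos_iff_support_of_nonneg_ae hnonneg
    (hμ.memLp_id.integrable le_rfl), hsupp, measure_compl₀ (nullMeasurableSet_singleton 0)
    (by simp [hnull]), hnull, tsub_zero]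
  exact Measure.measure_univ_pos.2 (NeZero.ne μ)

end IsAcim

section Correlations

open Filter Topology

variable {z : ℝ} {φ : ℝ → ℝ}

lemma exists_eventually_le_abs_birkhoffSum_lsv_sub (hz : 0 < z)
    (hcont : ContinuousWithinAt φ (Ici 0) 0) {m : ℝ} (hm : φ 0 ≠ m) :
    ∃ δ > 0, ∀ᶠ n in atTop, ∀ x ∈ Icc 0 (escapePoint z (n + n)),
      n * δ ≤ |birkhoffSum (lsv z) φ n x - n * m| := by
  set δ := |φ 0 - m| / 2
  have hδ : 0 < δ := half_pos (abs_pos.2 (sub_ne_zero.2 hm))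
  obtain ⟨r, hr, hφr⟩ := mem_nhdsGE_iff_exists_Icc_subset.1
    (hcont (Metric.closedBall_mem_nhds (φ 0) hδ))
  refine ⟨δ, hδ, ((tendsto_escapePoint hz).eventually_le_const hr).mono fun n hn x hx => ?_⟩
  have hclose : |birkhoffSum (lsv z) φ n x - n * φ 0| ≤ n * δ := by
    calc |birkhoffSum (lsv z) φ n x - n * φ 0|
        = |∑ k ∈ Finset.range n, (φ ((lsv z)^[k] x) - φ 0)| := by
          simp [birkhoffSum]
      _ ≤ ∑ _k ∈ Finset.range n, δ := by
          refine (Finset.abs_sum_le_sum_abs _ _).trans (Finset.sum_le_sum fun k hk => ?_)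
          have horbit : (lsv z)^[k] x ∈ Icc 0 (escapePoint z n) := by
            refine mapsTo_lsv_iterate_Icc_escapePoint hz n k ⟨hx.1, hx.2.trans ?_⟩
            have := Finset.mem_range.1 hk
            exact escapePoint_antitone hz (by lia)
          exact hφr ⟨horbit.1, horbit.2.trans hn⟩
      _ = n * δ := by simp
  have hfar : n * |φ 0 - m| ≤
      |birkhoffSum (lsv z) φ n x - n * φ 0| + |birkhoffSum (lsv z) φ n x - n * m| := by
    rw [← Nat.abs_cast, ← abs_mul, Nat.abs_cast, mul_sub, abs_sub_comm _ (n * φ 0)]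
    exact abs_sub_le _ _ _
  have htwo : |φ 0 - m| = 2 * δ := (mul_div_cancel₀ _ two_ne_zero).symm
  rw [htwo] at hfar
  linarith

theorem not_summable_lsv_autocorrelation (hz : z ∈ Ioo (1 / 2) 1) {μ : Measure ℝ}
    [IsProbabilityMeasure μ] (hμ : IsAcim z μ) (hφ : MemLp φ 2 μ)
    (hcont : ContinuousWithinAt φ (Ici 0) 0) (hmean : φ 0 ≠ ∫ x, φ x ∂μ) :
    ¬Summable fun n : ℕ =>
      |∫ x, φ x * φ ((lsv z)^[n + 1] x) ∂μ - (∫ x, φ x ∂μ) * ∫ x, φ x ∂μ| := by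
  have hz0 : 0 < z := one_half_pos.trans hz.1
  intro hsum
  simp only [← covariance_comp_of_measurePreserving (hμ.measurePreserving.iterate _) hφ hφ] at hsum
  obtain ⟨δ, hδ, hdev⟩ := exists_eventually_le_abs_birkhoffSum_lsv_sub hz0 hcont hmean
  obtain ⟨C, hC⟩ :=
    exists_measureReal_birkhoffSum_deviation_le hμ.measurePreserving hφ hsum hδ
  set c := μ.real (Ico (1 / 2) 1)
  have hc : 0 < c := hμ.real_Ico_half_pos hz0
  have hgrowth : Tendsto (fun n : ℕ => ((3 * n : ℕ) : ℝ) ^ (2 : ℝ) * escapePoint z (3 * n))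
      atTop atTop :=
    (tendsto_rpow_mul_escapePoint_atTop hz0 hz.2.le
      (inv_lt_of_inv_lt₀ two_pos (by simpa using hz.1))).comp
      (tendsto_id.const_mul_atTop' three_pos)
  obtain ⟨n, hn, hlarge⟩ := (hdev.and (hgrowth.eventually_gt_atTop (9 * (C / c)))).exists
  have hbound : n * (n * escapePoint z (3 * n) * c) ≤ C := by
    refine le_trans ?_ (hC n)
    gcongr
    calc n * escapePoint z (3 * n) * c = n * escapePoint z (n + n + n) * c := by ring_nf
      _ ≤ μ.real (Ico 0 (escapePoint z (n + n))) := hμ.mul_escapePoint_le_real_Ico hz0 _ _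
      _ ≤ μ.real {x | n * δ ≤ |birkhoffSum (lsv z) φ n x - n * ∫ y, φ y ∂μ|} :=
        measureReal_mono fun x hx => hn x (Ico_subset_Icc_self hx)
  have : n ^ 2 * escapePoint z (3 * n) ≤ C / c := by
    rw [le_div_iff₀ hc]
    linarith
  rw [Real.rpow_two] at hlarge
  push_cast at hlarge
  linarith

end Correlations

/-- For `z ∈ (1/2, 1)` and `μ` the unique absolutely continuous `f_z`-invariant
Borel probability measure on `[0,1]`, there are Hölder continuous observables `φ, ψ` whose
correlations are not summable. -/
theorem lsv_correlations_not_summable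
    (z : ℝ) (hz : z ∈ Set.Ioo (1 / 2 : ℝ) 1)
    (μ : Measure ℝ) (hμprob : IsProbabilityMeasure μ) (hμsupp : μ (Set.Icc (0 : ℝ) 1)ᶜ = 0)
    (hμac : μ ≪ volume) (hμinv : MeasurePreserving (lsv z) μ μ) :
    ∃ φ ψ : ℝ → ℝ,
      (∃ C r : ℝ≥0, 0 < r ∧ r ≤ 1 ∧ HolderOnWith C r φ (Set.Icc (0 : ℝ) 1)) ∧
      (∃ C r : ℝ≥0, 0 < r ∧ r ≤ 1 ∧ HolderOnWith C r ψ (Set.Icc (0 : ℝ) 1)) ∧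
      ¬ Summable (fun n : ℕ =>
        |∫ x, φ x * ψ ((lsv z)^[n + 1] x) ∂μ - (∫ x, φ x ∂μ) * ∫ x, ψ x ∂μ|) := by
  have hμ : IsAcim z μ := ⟨mem_ae_iff.2 hμsupp, hμac, hμinv⟩
  have hholder : ∃ C r : ℝ≥0, 0 < r ∧ r ≤ 1 ∧ HolderOnWith C r (id : ℝ → ℝ) (Icc 0 1) :=
    ⟨1, 1, one_pos, le_rfl, LipschitzWith.id.lipschitzOnWith.holderOnWith⟩
  exact ⟨id, id, hholder, hholder,
    not_summable_lsv_autocorrelation hz hμ hμ.memLp_id continuousWithinAt_id hμ.integral_id_pos.ne⟩
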